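/- Let A be a Noetherian domain and M a finitely presented left A-module with presentation A^s →^{F_1} A^r → M → 0 and transposed module M^T = A^s/Im(F_1^T). Then M is reflexive (the natural map M → (M*)* is an isomorphism) if and only if Ext^i_A(M^T, A) = 0 for i = 1, 2. -/

import Mathlib

open CategoryTheory

/-- The right `A`-linear map `A^r → A^s` (on right modules, i.e. `Aᵐᵒᵖ`-modules) given by
the transpose of a matrix `F ∈ M_{r×s}(A)`: `c ↦ (∑ i, F i j * c i)_j`. -/
def transposeMap {A : Type*} [Ring A] {r s : ℕ} (F : Matrix (Fin r) (Fin s) A) :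
    (Fin r → A) →ₗ[Aᵐᵒᵖ] (Fin s → A) where
  toFun c := fun j => ∑ i, F i j * c i
  map_add' u v := by ext j; simp [mul_add, Finset.sum_add_distrib]
  map_smul' a c := by
    ext j
    simp [MulOpposite.smul_eq_mul_unop, Finset.sum_mul, mul_assoc]

/-- The canonical evaluation map from a left `A`-module `M` to its bidual
`(M*)* = Hom_{Aᵐᵒᵖ}(Hom_A(M, A), A)`. -/
def evalBidual {A : Type*} [Ring A] (M : Type*) [AddCommGroup M] [Module A M] (m : M) :
    (M →ₗ[A] A) →ₗ[Aᵐᵒᵖ] A where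
  toFun f := f m
  map_add' f g := rfl
  map_smul' a f := rfl

/-!
Let `R : A^r → A^s` be the map of right modules given by `F₁ᵀ`, so that `M^T = A^s ⧸ im R`.
Since `A^s` and `A^r` are projective, dimension shifting along `0 → im R → A^s → M^T → 0` and
`0 → ker R → A^r → im R → 0` shows that `Ext¹(M^T, A)` vanishes iff functionals on `im R` extend
to `A^s`, and `Ext²(M^T, A)` vanishes iff functionals on `ker R` extend to `A^r`.

On the other side, evaluating functionals on the generators of `M` identifies `M*` with `ker R`,
and right functionals on `A^r` are the same as row vectors `c`; under these identifications the
evaluation map sends the class of `c` to the restriction of `x ↦ c ⬝ᵥ x` to `ker R`. So it is onto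
iff functionals on `ker R` extend to `A^r`. It is one-to-one iff every `c` annihilating `ker R` lies
in the row space of `F₁ᵀ`. Such a `c` is a functional on `im R` composed with `R`, and it lies in the
row space exactly when that functional extends to `A^s`.
-/

open Matrix

universe w u v

section DimensionShifting

variable {C : Type*} [Category* C] [Abelian C]

/-- Transfers vanishing from the functor `Ext`, defined by projective resolutions, to the groups
`Abelian.Ext`, for which the long exact sequences are available. -/
theorem subsingleton_ext_succ_iff_subsingleton_abelianExt (k : Type*) [Ring k] [Linear k C]
    [EnoughProjectives C] [HasExt.{w} C] (X Y : C) (n : ℕ) :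
    Subsingleton (((Ext k C (n + 1)).obj (.op X)).obj Y) ↔
      Subsingleton (Abelian.Ext X Y (n + 1)) := by
  let P := projectiveResolution X
  calc
    _ ↔ ∀ f : P.complex.X (n + 1) ⟶ Y, P.complex.d (n + 2) (n + 1) ≫ f = 0 →
          ∃ g : P.complex.X n ⟶ Y, P.complex.d (n + 1) n ≫ g = f := by
      rw [← ModuleCat.isZero_iff_subsingleton, (P.isoExt (n + 1) Y).isZero_iff,
        ← HomologicalComplex.exactAt_iff_isZero_homology,
        HomologicalComplex.exactAt_iff' _ n (n + 1) (n + 2) (by simp) (by simp),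
        ShortComplex.moduleCat_exact_iff]
      rfl
    _ ↔ ∀ α : Abelian.Ext X Y (n + 1), α = 0 := by
      refine ⟨fun h α => ?_, fun h f hf => (P.extMk_eq_zero_iff f _ rfl hf n rfl).1 (h _)⟩
      obtain ⟨f, hf, rfl⟩ := P.extMk_surjective α (n + 2) rfl
      exact (P.extMk_eq_zero_iff f _ rfl hf n rfl).2 (h f hf)
    _ ↔ _ := (subsingleton_iff_forall_eq 0).symm

variable [HasExt.{w} C] {S : ShortComplex C} [Projective S.X₂]

theorem subsingleton_abelianExt_one_iff (hS : S.ShortExact) (Y : C) :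
    Subsingleton (Abelian.Ext S.X₃ Y 1) ↔
      Function.Surjective fun g : S.X₂ ⟶ Y => S.f ≫ g := by
  constructor
  · intro _ f
    obtain ⟨x, hx⟩ := Abelian.Ext.contravariant_sequence_exact₁ hS Y (.mk₀ f) (add_zero 1)
      (Subsingleton.elim _ _)
    obtain ⟨g, rfl⟩ := Abelian.Ext.addEquiv₀.symm.surjective x
    exact ⟨g, Abelian.Ext.addEquiv₀.symm.injective (by simpa using hx)⟩
  · refine fun h => subsingleton_of_forall_eq 0 fun x => ?_
    obtain ⟨y, rfl⟩ := Abelian.Ext.contravariant_sequence_exact₃ hS Y x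
      (Abelian.Ext.eq_zero_of_projective _) (add_zero 1)
    obtain ⟨f, rfl⟩ := Abelian.Ext.addEquiv₀.symm.surjective y
    obtain ⟨g, rfl⟩ := h f
    change hS.extClass.comp (.mk₀ (S.f ≫ g)) _ = 0
    rw [← Abelian.Ext.mk₀_comp_mk₀, hS.extClass_comp_assoc]

theorem subsingleton_abelianExt_add_two_iff (hS : S.ShortExact) (Y : C) (n : ℕ) :
    Subsingleton (Abelian.Ext S.X₃ Y (n + 2)) ↔
      Subsingleton (Abelian.Ext S.X₁ Y (n + 1)) := by
  constructor
  · refine fun _ => subsingleton_of_forall_eq 0 fun x => ?_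
    obtain ⟨y, rfl⟩ := Abelian.Ext.contravariant_sequence_exact₁ hS Y x (add_comm 1 (n + 1))
      (Subsingleton.elim _ _)
    rw [y.eq_zero_of_projective, Abelian.Ext.comp_zero]
  · refine fun _ => subsingleton_of_forall_eq 0 fun x => ?_
    obtain ⟨y, rfl⟩ := Abelian.Ext.contravariant_sequence_exact₃ hS Y x
      (Abelian.Ext.eq_zero_of_projective _) (add_comm 1 (n + 1))
    rw [Subsingleton.elim y 0, Abelian.Ext.comp_zero]

end DimensionShifting

section Cokernel

variable {B : Type u} [Ring B] [Small.{v} B] {P Q : Type v} [AddCommGroup P] [Module B P]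
  [AddCommGroup Q] [Module B Q]

theorem subsingleton_abelianExt_one_iff_of_surjective [Module.Projective B P] {p : P →ₗ[B] Q}
    (hp : Function.Surjective p) (Y : Type v) [AddCommGroup Y] [Module B Y] :
    Subsingleton (Abelian.Ext (ModuleCat.of B Q) (ModuleCat.of B Y) 1) ↔
      Function.Surjective fun ψ : P →ₗ[B] Y => ψ ∘ₗ (LinearMap.ker p).subtype := by
  have : Projective p.shortComplexKer.X₂ := inferInstanceAs (Projective (ModuleCat.of B P))
  rw [subsingleton_abelianExt_one_iff (LinearMap.shortExact_shortComplexKer hp)]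
  exact ((ModuleCat.homEquiv.symm.surjective.of_comp_iff _).symm.trans
    (ModuleCat.homEquiv.comp_surjective _).symm)

variable [Module.Projective B Q] (d : P →ₗ[B] Q) (Y : Type v) [AddCommGroup Y] [Module B Y]

theorem subsingleton_abelianExt_one_quotient_range_iff :
    Subsingleton (Abelian.Ext (ModuleCat.of B (Q ⧸ LinearMap.range d)) (ModuleCat.of B Y) 1) ↔
      Function.Surjective fun ψ : Q →ₗ[B] Y => ψ ∘ₗ (LinearMap.range d).subtype := by
  rw [subsingleton_abelianExt_one_iff_of_surjective (Submodule.mkQ_surjective _),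
    Submodule.ker_mkQ]

theorem subsingleton_abelianExt_two_quotient_range_iff [Module.Projective B P] :
    Subsingleton (Abelian.Ext (ModuleCat.of B (Q ⧸ LinearMap.range d)) (ModuleCat.of B Y) 2) ↔
      Function.Surjective fun ψ : P →ₗ[B] Y => ψ ∘ₗ (LinearMap.ker d).subtype := by
  let q := (LinearMap.range d).mkQ
  have : Projective q.shortComplexKer.X₂ := inferInstanceAs (Projective (ModuleCat.of B Q))
  rw [subsingleton_abelianExt_add_two_iff
    (LinearMap.shortExact_shortComplexKer (Submodule.mkQ_surjective (LinearMap.range d)))]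
  change Subsingleton (Abelian.Ext (ModuleCat.of B (LinearMap.ker q)) _ 1) ↔ _
  rw [Submodule.ker_mkQ, subsingleton_abelianExt_one_iff_of_surjective d.surjective_rangeRestrict,
    LinearMap.ker_rangeRestrict]

end Cokernel

section Functionals

variable {B P Q Y : Type*} [Ring B] [AddCommGroup P] [Module B P] [AddCommGroup Q] [Module B Q]
  [AddCommGroup Y] [Module B Y]

theorem surjective_comp_subtype_range_iff (d : P →ₗ[B] Q) :
    (Function.Surjective fun ψ : Q →ₗ[B] Y => ψ ∘ₗ (LinearMap.range d).subtype) ↔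
      ∀ φ : P →ₗ[B] Y, φ ∘ₗ (LinearMap.ker d).subtype = 0 → ∃ ψ : Q →ₗ[B] Y, ψ ∘ₗ d = φ := by
  constructor
  · intro h φ hφ
    have hker : LinearMap.ker d ≤ LinearMap.ker φ := fun x hx => LinearMap.congr_fun hφ ⟨x, hx⟩
    obtain ⟨ψ, hψ⟩ := h ((LinearMap.ker d).liftQ φ hker ∘ₗ d.quotKerEquivRange.symm)
    refine ⟨ψ, LinearMap.ext fun x => (LinearMap.congr_fun hψ (d.rangeRestrict x)).trans ?_⟩
    exact congrArg _ (d.quotKerEquivRange_symm_apply_image x _)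
  · intro h χ
    obtain ⟨ψ, hψ⟩ := h (χ ∘ₗ d.rangeRestrict) (LinearMap.ext fun x => by
      simp [LinearMap.mem_ker.1 (d.ker_rangeRestrict.ge x.2)])
    refine ⟨ψ, LinearMap.ext ?_⟩
    rintro ⟨_, x, rfl⟩
    exact LinearMap.congr_fun hψ x

end Functionals

section Duality

variable {A : Type*} [Ring A] {m n : Type*} [Fintype m] [Fintype n]

theorem bijective_dotProductBilin :
    Function.Bijective (dotProductBilin A Aᵐᵒᵖ : (n → A) →ₗ[A] (n → A) →ₗ[Aᵐᵒᵖ] A) := by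
  classical
  refine ⟨fun c c' h => dotProduct_eq _ _ (LinearMap.congr_fun h), fun φ =>
    ⟨fun i => φ (Pi.single i 1), LinearMap.pi_ext fun i a => ?_⟩⟩
  have : (Pi.single i a : n → A) = MulOpposite.op a • Pi.single i 1 := by
    rw [← Pi.single_smul, MulOpposite.smul_eq_mul_unop, MulOpposite.unop_op, one_mul]
  rw [this, map_smul, map_smul, dotProductBilin_apply_apply, dotProduct_single_one]

theorem apply_eq_dotProduct_apply_single [DecidableEq n] (φ : (n → A) →ₗ[A] A) (c : n → A) :
    φ c = c ⬝ᵥ fun i => φ (Pi.single i 1) := by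
  conv_lhs => rw [pi_eq_sum_univ' c, map_sum]
  simp [dotProduct]

theorem mulVec_eq_zero_iff_forall_vecMul_dotProduct (G : Matrix m n A) (x : n → A) :
    G *ᵥ x = 0 ↔ ∀ c, c ᵥ* G ⬝ᵥ x = 0 := by
  classical
  simp only [← dotProduct_mulVec]
  exact ⟨fun h c => by rw [h, dotProduct_zero], fun h => funext fun j => by
    rw [← single_one_dotProduct j (G *ᵥ x), h, Pi.zero_apply]⟩

theorem exists_comp_mulVecBilin_eq_dotProductBilin_iff (G : Matrix m n A) (c : n → A) :
    (∃ ψ : (m → A) →ₗ[Aᵐᵒᵖ] A, ψ ∘ₗ mulVecBilin A Aᵐᵒᵖ G = dotProductBilin A Aᵐᵒᵖ c) ↔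
      c ∈ LinearMap.range G.vecMulLinear := by
  rw [bijective_dotProductBilin.surjective.exists, LinearMap.mem_range]
  refine exists_congr fun a => ?_
  rw [← bijective_dotProductBilin.injective.eq_iff]
  refine Eq.congr_left (LinearMap.ext fun x => ?_)
  exact dotProduct_mulVec a G x

variable {M : Type*} [AddCommGroup M] [Module A M] {G : Matrix m n A} {π : (n → A) →ₗ[A] M}
  (hπ : Function.Surjective π) (hG : LinearMap.ker π = LinearMap.range G.vecMulLinear)

/-- The identification of the dual of the left module presented by the rows of `G` with the right
module of solutions of `G *ᵥ x = 0`, sending a functional to its values on the generators. -/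
noncomputable def dualEquivKerMulVec [DecidableEq n] :
    (M →ₗ[A] A) ≃ₗ[Aᵐᵒᵖ] LinearMap.ker (mulVecBilin A Aᵐᵒᵖ G) where
  toFun g := ⟨fun i => g (π (Pi.single i 1)),
    (mulVec_eq_zero_iff_forall_vecMul_dotProduct G _).2 fun c => by
      have hc : π (c ᵥ* G) = 0 := hG.ge ⟨c, rfl⟩
      exact (apply_eq_dotProduct_apply_single (g ∘ₗ π) _).symm.trans (by simp [hc])⟩
  map_add' _ _ := rfl
  map_smul' _ _ := rfl
  invFun x := (LinearMap.ker π).liftQ ((dotProductBilin A Aᵐᵒᵖ).flip (x : n → A)) (by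
      rw [hG]
      rintro _ ⟨c, rfl⟩
      exact (mulVec_eq_zero_iff_forall_vecMul_dotProduct G _).1 x.2 c) ∘ₗ
    (π.quotKerEquivOfSurjective hπ).symm
  left_inv g := LinearMap.ext <| hπ.forall.2 fun c => by
    simpa using (apply_eq_dotProduct_apply_single (g ∘ₗ π) c).symm
  right_inv x := by ext; simp

theorem apply_eq_dotProduct_dualEquivKerMulVec [DecidableEq n] (g : M →ₗ[A] A) (c : n → A) :
    g (π c) = c ⬝ᵥ (dualEquivKerMulVec hπ hG g : n → A) :=
  apply_eq_dotProduct_apply_single (g ∘ₗ π) c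

theorem evalBidual_apply_eq_comp [DecidableEq n] (c : n → A) :
    evalBidual (A := A) M (π c) = (dotProductBilin A Aᵐᵒᵖ c ∘ₗ
      (LinearMap.ker (mulVecBilin A Aᵐᵒᵖ G)).subtype) ∘ₗ
        (dualEquivKerMulVec hπ hG).toLinearMap :=
  LinearMap.ext fun g => apply_eq_dotProduct_dualEquivKerMulVec hπ hG g c

include hπ hG

theorem injective_evalBidual_iff :
    Function.Injective (evalBidual (A := A) M) ↔
      Function.Surjective fun ψ : (m → A) →ₗ[Aᵐᵒᵖ] A =>
        ψ ∘ₗ (LinearMap.range (mulVecBilin A Aᵐᵒᵖ G)).subtype := by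
  classical
  let e := dualEquivKerMulVec hπ hG
  have evalBidual_eq_zero_iff (c : n → A) : evalBidual (A := A) M (π c) = 0 ↔
      dotProductBilin A Aᵐᵒᵖ c ∘ₗ (LinearMap.ker (mulVecBilin A Aᵐᵒᵖ G)).subtype = 0 := by
    rw [evalBidual_apply_eq_comp hπ hG, ← LinearMap.zero_comp e.toLinearMap,
      LinearMap.cancel_right e.surjective]
  rw [surjective_comp_subtype_range_iff, bijective_dotProductBilin.surjective.forall]
  simp only [exists_comp_mulVecBilin_eq_dotProductBilin_iff, ← hG, ← evalBidual_eq_zero_iff,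
    LinearMap.mem_ker]
  rw [← hπ.forall (p := fun y => evalBidual (A := A) M y = 0 → y = 0)]
  exact injective_iff_map_eq_zero (LinearMap.id (R := Aᵐᵒᵖ) (M := M →ₗ[A] A)).flip

theorem surjective_evalBidual_iff :
    Function.Surjective (evalBidual (A := A) M) ↔
      Function.Surjective fun ψ : (n → A) →ₗ[Aᵐᵒᵖ] A =>
        ψ ∘ₗ (LinearMap.ker (mulVecBilin A Aᵐᵒᵖ G)).subtype := by
  classical
  let e := dualEquivKerMulVec hπ hG
  have he : Function.Bijective fun χ : LinearMap.ker (mulVecBilin A Aᵐᵒᵖ G) →ₗ[Aᵐᵒᵖ] A =>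
      χ ∘ₗ e.toLinearMap := e.symm.arrowCongrAddEquiv (.refl Aᵐᵒᵖ A) |>.bijective
  rw [← hπ.of_comp_iff, ← bijective_dotProductBilin.surjective.of_comp_iff,
    ← Function.Surjective.of_comp_iff' he]
  exact iff_of_eq (congrArg _ (funext (evalBidual_apply_eq_comp hπ hG)))

end Duality

instance free_mulOpposite_self {A : Type*} [Ring A] : Module.Free Aᵐᵒᵖ A :=
  .of_equiv (MulOpposite.opLinearEquiv Aᵐᵒᵖ).symm

theorem reflexive_iff_ext_of_transpose_vanish_general {A : Type u} [Ring A]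
    (M : Type v) [AddCommGroup M] [Module A M]
    {s r : ℕ} (F₁ : Matrix (Fin r) (Fin s) A)
    (f₁ : (Fin s → A) →ₗ[A] (Fin r → A))
    (hf₁ : ∀ c i, f₁ c i = ∑ j, c j * F₁ i j)
    (π : (Fin r → A) →ₗ[A] M) (hπ : Function.Surjective π)
    (hexact : LinearMap.ker π = LinearMap.range f₁) :
    Function.Bijective (evalBidual (A := A) M) ↔
      (∀ i : ℕ, i = 1 ∨ i = 2 →
        Subsingleton (((Ext ℤ (ModuleCat Aᵐᵒᵖ) i).obj
          (Opposite.op (ModuleCat.of Aᵐᵒᵖ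
            ((Fin s → A) ⧸ LinearMap.range (transposeMap F₁))))).obj
          (ModuleCat.of Aᵐᵒᵖ A))) := by
  have hF₁ : f₁ = F₁ᵀ.vecMulLinear := LinearMap.ext fun c => funext (hf₁ c)
  have hker : LinearMap.ker π = LinearMap.range F₁ᵀ.vecMulLinear := hF₁ ▸ hexact
  have transposeMap_eq : transposeMap F₁ = mulVecBilin A Aᵐᵒᵖ F₁ᵀ := rfl
  simp only [forall_eq_or_imp, forall_eq]
  refine and_congr ?_ ?_
  · rw [injective_evalBidual_iff hπ hker, ← transposeMap_eq,
      ← subsingleton_abelianExt_one_quotient_range_iff]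
    exact (subsingleton_ext_succ_iff_subsingleton_abelianExt ℤ _ _ 0).symm
  · rw [surjective_evalBidual_iff hπ hker, ← transposeMap_eq,
      ← subsingleton_abelianExt_two_quotient_range_iff]
    exact (subsingleton_ext_succ_iff_subsingleton_abelianExt ℤ _ _ 1).symm

/-- Let `A` be a (left and right) Noetherian domain and `M` a finitely
presented left `A`-module with presentation `A^s →^{F₁} A^r → M → 0` (the map `f₁` having
matrix `F₁`) and transposed right module `M^T = A^s/Im(F₁^T)`.  Then `M` is reflexive
(the natural evaluation map `M → (M*)*` is an isomorphism, i.e. bijective) if and only if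
`Ext^i_A(M^T, A) = 0` for `i = 1, 2` (Ext over right `A`-modules, i.e. `Aᵐᵒᵖ`-modules). -/
theorem reflexive_iff_ext_of_transpose_vanish {A : Type} [Ring A] [IsDomain A]
    [IsNoetherianRing A] [IsNoetherianRing Aᵐᵒᵖ]
    (M : Type) [AddCommGroup M] [Module A M]
    {s r : ℕ} (F₁ : Matrix (Fin r) (Fin s) A)
    (f₁ : (Fin s → A) →ₗ[A] (Fin r → A))
    (hf₁ : ∀ c i, f₁ c i = ∑ j, c j * F₁ i j)
    (π : (Fin r → A) →ₗ[A] M) (hπ : Function.Surjective π)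
    (hexact : LinearMap.ker π = LinearMap.range f₁) :
    Function.Bijective (evalBidual (A := A) M) ↔
      (∀ i : ℕ, i = 1 ∨ i = 2 →
        Subsingleton (((Ext ℤ (ModuleCat Aᵐᵒᵖ) i).obj
          (Opposite.op (ModuleCat.of Aᵐᵒᵖ
            ((Fin s → A) ⧸ LinearMap.range (transposeMap F₁))))).obj
          (ModuleCat.of Aᵐᵒᵖ A))) :=
  reflexive_iff_ext_of_transpose_vanish_general M F₁ f₁ hf₁ π hπ hexact
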